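/- arXiv:2410.21081 — 6 statements merged into one kernel-verified Lean document; each statement's English description precedes it below -/
import Mathlib

section
/- Let B > 0 and let X be an integrable real-valued random variable with E[X] = 0 whose law is absolutely continuous with respect to Lebesgue measure with a density f satisfying f(x) ≤ B for almost every x ∈ ℝ. Then E[|X|] ≥ 1/(4·B). -/
/-!
Among laws with density at most `B`, the one minimising `E|X|` is uniform on `[-a, a]` with
`a = 1 / (2B)`. Quantitatively, `a - |X| ≤ (a - |X|) 1_{|X| ≤ a}`, and the law of `X` is dominated
by `B` times Lebesgue measure, so
`a - E|X| ≤ B ∫_{-a}^{a} (a - |x|) dx = B a² = a / 2`, that is `E|X| ≥ a / 2 = 1 / (4B)`.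
-/

open MeasureTheory ProbabilityTheory

/-- The area of the tent of height `a` over `[-a, a]`. -/
lemma integral_tent (a : ℝ) (ha : 0 < a) :
    ∫ x, (Set.Ioc (-a) a).indicator (fun x => a - |x|) x = a ^ 2 := by
  rw [integral_indicator measurableSet_Ioc, ← intervalIntegral.integral_of_le (by linarith),
    ← intervalIntegral.integral_add_adjacent_intervals (b := 0)
      ((by fun_prop : Continuous fun x : ℝ => a - |x|).intervalIntegrable _ _)
      ((by fun_prop : Continuous fun x : ℝ => a - |x|).intervalIntegrable _ _)]
  have h1 : ∫ x in (-a)..0, (a - |x|) = ∫ x in (-a)..0, (a + x) := by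
    refine intervalIntegral.integral_congr fun x hx => ?_
    rw [Set.uIcc_of_le (by linarith)] at hx
    simp [abs_of_nonpos hx.2]
  have h2 : ∫ x in (0)..a, (a - |x|) = ∫ x in (0)..a, (a - x) := by
    refine intervalIntegral.integral_congr fun x hx => ?_
    rw [Set.uIcc_of_le ha.le] at hx
    simp [abs_of_nonneg hx.1]
  rw [h1, h2, intervalIntegral.integral_add (by simp) (by simp),
    intervalIntegral.integral_sub (by simp) (by simp)]
  simp
  ring

/-- If `X` is an integrable real random variable with mean zero whose law has a density
(w.r.t. Lebesgue measure) bounded above by `B > 0` almost everywhere, then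
`E[|X|] ≥ 1/(4·B)`. -/
theorem abs_expectation_ge_of_density_le {Ω : Type*} [MeasurableSpace Ω] (μ : Measure Ω)
    [IsProbabilityMeasure μ] (B : ℝ) (hB : 0 < B) (X : Ω → ℝ) (hXmeas : Measurable X)
    (f : ℝ → ℝ) (hf_meas : Measurable f) (hf_nonneg : ∀ x, 0 ≤ f x)
    (hf_bound : ∀ᵐ x ∂(volume : Measure ℝ), f x ≤ B)
    (hdensity : μ.map X = volume.withDensity (fun x => ENNReal.ofReal (f x)))
    (hint : Integrable X μ) (hmean : ∫ ω, X ω ∂μ = 0) :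
    1 / (4 * B) ≤ ∫ ω, |X ω| ∂μ := by
  obtain ⟨a, ha⟩ : ∃ a, a = 1 / (2 * B) := ⟨_, rfl⟩
  have ha0 : 0 < a := by rw [ha]; positivity
  set g : ℝ → ℝ := (Set.Ioc (-a) a).indicator (fun x => a - |x|) with hg
  have hle : μ.map X ≤ ENNReal.ofReal B • volume := by
    rw [hdensity, ← withDensity_const]
    refine withDensity_mono ?_
    filter_upwards [hf_bound] with x hx using ENNReal.ofReal_le_ofReal hx
  have hg_meas : Measurable g :=
    (by fun_prop : Measurable fun x : ℝ => a - |x|).indicator measurableSet_Ioc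
  have hg_nonneg : ∀ x, 0 ≤ g x := fun x =>
    Set.indicator_nonneg (fun x hx => sub_nonneg.2 (abs_le.2 ⟨hx.1.le, hx.2⟩)) x
  have hg_ge : ∀ x, a - |x| ≤ g x := fun x => by
    by_cases hx : x ∈ Set.Ioc (-a) a
    · simp [hg, hx]
    · rw [hg, Set.indicator_of_notMem hx, sub_nonpos]
      by_contra! h
      exact hx ⟨(abs_lt.1 h).1, (abs_lt.1 h).2.le⟩
  have hg_int : Integrable g volume := by
    rw [hg, integrable_indicator_iff measurableSet_Ioc]
    exact ((by fun_prop : Continuous fun x : ℝ => a - |x|).integrableOn_Icc).mono_set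
      Set.Ioc_subset_Icc_self
  have hg_int' : Integrable g (ENNReal.ofReal B • volume) :=
    hg_int.smul_measure ENNReal.ofReal_ne_top
  have hupper : ∫ x, g x ∂(μ.map X) ≤ B * a ^ 2 := by
    refine (integral_mono_measure hle (ae_of_all _ hg_nonneg) hg_int').trans_eq ?_
    rw [integral_smul_measure, integral_tent a ha0, ENNReal.toReal_ofReal hB.le, smul_eq_mul]
  rw [integral_map hXmeas.aemeasurable hg_meas.aestronglyMeasurable] at hupper
  have hlower : ∫ ω, (a - |X ω|) ∂μ ≤ ∫ ω, g (X ω) ∂μ :=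
    integral_mono ((integrable_const a).sub hint.abs)
      ((hg_int'.mono_measure hle).comp_measurable hXmeas) fun ω => hg_ge (X ω)
  rw [integral_sub (integrable_const a) hint.abs] at hlower
  simp only [integral_const, probReal_univ, one_smul] at hlower
  have h4 : 1 / (4 * B) = a - B * a ^ 2 := by
    rw [ha]
    field_simp
    norm_num
  linarith
end

section
/- Let T ≥ 2 be an integer, and let a*, b*, D_L, D_U be real numbers with a* > 0, b* > 0, D_L ≤ D_U, and max(|D_L|, |D_U|) ≤ log²(T). Assume log(T) > 4, 1/log(T) ≤ b*/2, and 2·(1 + 4a* + 2b*)/b* ≤ log(T). Let (x_t)_{t=0}^{T}, (u_t)_{t=0}^{T−1}, (w_t)_{t=0}^{T−1}, and (a_t, b_t)_{t=0}^{T−1} be real sequences satisfying: |x₀| ≤ 4·log²(T); for all t < T, |a_t − a*| ≤ 1/log(T), |b_t − b*| ≤ 1/log(T), D_L ≤ a_t·x_t + b_t·u_t ≤ D_U, |w_t| ≤ log²(T), and x_{t+1} = a*·x_t + b*·u_t + w_t. Then |x_t| ≤ 4·log²(T) for all t ≤ T, and |u_t| ≤ (2·(1 + 4a* + 2b*)/b*)·log²(T)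 for all t < T. -/
/-!
Write `L = log T`, `ε = 1 / L` and `K = 2 (1 + 4a* + 2b*) / b*`. The bound `|x t| ≤ 4 L²` is
carried along by induction, and at each time it yields the bound on `u t`.

Since `ε ≤ b*/2`, the estimated gain satisfies `b t ≥ b*/2`, so safety gives
`(b*/2) |u t| ≤ L² + (a* + ε) · 4 L² ≤ (1 + 4a* + 2b*) L²`, i.e. `|u t| ≤ K L²`
(`control_bound`). The true expected position differs from the safe one by at most
`ε |x t| + ε |u t| ≤ 4 ε L² + ε K L² ≤ L² + L²`, using `ε ≤ 1/4` and `K ≤ L`. With the boundary and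
the noise contributing `L²` each, `|x (t + 1)| ≤ 4 L²` (`position_step`).
-/

/-- A safe control at a position bounded by `4M` is bounded; `M` stands for `log² T` and `ε` for
the estimation error `1 / log T`. -/
lemma control_bound {A B a b x u ε M : ℝ} (hA : 0 < A) (hB : 0 < B)
    (hεB : ε ≤ B / 2) (ha : |a - A| ≤ ε) (hb : |b - B| ≤ ε) (hx : |x| ≤ 4 * M)
    (hs : |a * x + b * u| ≤ M) :
    |u| ≤ (2 * (1 + 4 * A + 2 * B) / B) * M := by
  have hb' : B / 2 ≤ b := by linarith [(abs_le.mp hb).1]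
  have ha' : |a| ≤ A + B / 2 := by
    have := abs_le.mp ha
    exact abs_le.mpr ⟨by linarith, by linarith⟩
  have hax : |a * x| ≤ (A + B / 2) * (4 * M) := by
    rw [abs_mul]
    exact mul_le_mul ha' hx (abs_nonneg _) (by positivity)
  have hbu : b * |u| ≤ M + (A + B / 2) * (4 * M) := by
    calc b * |u| = |(a * x + b * u) - a * x| := by
          rw [add_sub_cancel_left, abs_mul, abs_of_pos (by linarith : 0 < b)]
      _ ≤ |a * x + b * u| + |a * x| := abs_sub _ _
      _ ≤ _ := add_le_add hs hax
  have h2 : B / 2 * |u| ≤ b * |u| := mul_le_mul_of_nonneg_right hb' (abs_nonneg _)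
  rw [div_mul_eq_mul_div, le_div_iff₀ hB]
  linarith

/-- One step of the true dynamics preserves the position bound `4M`, provided the estimation error
`ε` is at most `1/4` and the control satisfies `ε |u| ≤ M`. -/
lemma position_step {A B a b x u w ε M : ℝ} (hε : ε ≤ 1 / 4)
    (ha : |a - A| ≤ ε) (hb : |b - B| ≤ ε) (hx : |x| ≤ 4 * M)
    (hs : |a * x + b * u| ≤ M) (hu : ε * |u| ≤ M) (hw : |w| ≤ M) :
    |A * x + B * u + w| ≤ 4 * M := by
  have h1 : |(a - A) * x| ≤ M := by
    rw [abs_mul]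
    calc |a - A| * |x| ≤ 1 / 4 * (4 * M) :=
          mul_le_mul (ha.trans hε) hx (abs_nonneg _) (by norm_num)
      _ = M := by ring
  have h2 : |(b - B) * u| ≤ M := by
    rw [abs_mul]
    exact (mul_le_mul_of_nonneg_right hb (abs_nonneg _)).trans hu
  rw [abs_le] at *
  constructor <;> linarith [h1.1, h1.2, h2.1, h2.2, hs.1, hs.2, hw.1, hw.2]

/-- Deterministic version of the bounded-trajectory lemma: if each control is safe for
dynamics within `1/log T` of the true dynamics `(a*, b*)`, the noise is bounded by
`log² T`, and the boundaries are bounded by `log² T`, then all positions are bounded by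
`4·log² T` and all controls by `(2·(1 + 4a* + 2b*)/b*)·log² T`. -/
theorem bounded_positions_and_controls (T : ℕ) (hT : 2 ≤ T)
    (astar bstar DL DU : ℝ) (ha : 0 < astar) (hb : 0 < bstar) (hD : DL ≤ DU)
    (hDbound : max |DL| |DU| ≤ (Real.log T) ^ 2)
    (hlog1 : 4 < Real.log T) (hlog2 : 1 / Real.log T ≤ bstar / 2)
    (hlog3 : 2 * (1 + 4 * astar + 2 * bstar) / bstar ≤ Real.log T)
    (x u w a b : ℕ → ℝ) (hx0 : |x 0| ≤ 4 * (Real.log T) ^ 2)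
    (hdyn : ∀ t < T,
      |a t - astar| ≤ 1 / Real.log T ∧
      |b t - bstar| ≤ 1 / Real.log T ∧
      DL ≤ a t * x t + b t * u t ∧
      a t * x t + b t * u t ≤ DU ∧
      |w t| ≤ (Real.log T) ^ 2 ∧
      x (t + 1) = astar * x t + bstar * u t + w t) :
    (∀ t ≤ T, |x t| ≤ 4 * (Real.log T) ^ 2) ∧
      (∀ t < T, |u t| ≤ (2 * (1 + 4 * astar + 2 * bstar) / bstar) * (Real.log T) ^ 2) := by
  have hL : 0 < Real.log T := by linarith
  have hM : 0 ≤ (Real.log T) ^ 2 := sq_nonneg _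
  have hε : 1 / Real.log T ≤ 1 / 4 := one_div_le_one_div_of_le (by norm_num) hlog1.le
  have hsafe : ∀ t < T, |a t * x t + b t * u t| ≤ (Real.log T) ^ 2 := by
    intro t ht
    obtain ⟨-, -, hl, hr, -, -⟩ := hdyn t ht
    exact (abs_le_max_abs_abs hl hr).trans hDbound
  have hctrl : ∀ t < T, |x t| ≤ 4 * (Real.log T) ^ 2 →
      |u t| ≤ (2 * (1 + 4 * astar + 2 * bstar) / bstar) * (Real.log T) ^ 2 := by
    intro t ht hx
    obtain ⟨h1, h2, -⟩ := hdyn t ht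
    exact control_bound ha hb hlog2 h1 h2 hx (hsafe t ht)
  have hpos : ∀ t ≤ T, |x t| ≤ 4 * (Real.log T) ^ 2 := by
    intro t
    induction t with
    | zero => exact fun _ => hx0
    | succ t ih =>
      intro ht
      have ht' : t < T := ht
      have hx := ih ht'.le
      obtain ⟨h1, h2, -, -, hw, hstep⟩ := hdyn t ht'
      have hu : 1 / Real.log T * |u t| ≤ (Real.log T) ^ 2 := by
        rw [one_div_mul_eq_div, div_le_iff₀ hL, mul_comm]
        exact (hctrl t ht' hx).trans (mul_le_mul_of_nonneg_right hlog3 hM)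
      rw [hstep]
      exact position_step hε h1 h2 hx (hsafe t ht') hu hw
  exact ⟨hpos, fun t ht => hctrl t ht (hpos t ht.le)⟩
end

section
/- Let T ≥ 2 be an integer, and let a*, b*, D_L, D_U be real numbers with a* > 0, b* > 0, D_L ≤ D_U, and max(|D_L|, |D_U|) ≤ log²(T). Assume log(T) > 4, 1/log(T) ≤ b*/2, and 2·(1 + 4a* + 2b*)/b* ≤ log(T). Let x₀ be a real number with |x₀| ≤ 4·log²(T), and let (x_t)_{t=0}^{T}, (u_t)_{t=0}^{T−1}, (w_t)_{t=0}^{T−1}, (a_t, b_t)_{t=0}^{T−1} be integrable real random variables on a common probability space satisfying, almost surely for all t < T: |a_t − a*| ≤ 1/log(T), |b_t − b*| ≤ 1/log(T), D_L ≤ a_t·x_t + b_t·u_t ≤ D_U, and x_{t+1} = a*·x_t + b*·u_t + w_t; and suppose E[|w_t|] ≤ log²(T) for all t < T. Then E[|x_t|] ≤ 4·log²(T) for all t ≤ T, and E[|u_t|] ≤ (2·(1 + 4a* + 2b*)/b*)·log²(T) for all t < T. -/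
/-!
Write `L = log T`. A safe control satisfies `|aₜ xₜ + bₜ uₜ| ≤ L²`, and the hypothesis
`1 / L ≤ b* / 2` gives `bₜ ≥ b* / 2` and `|aₜ| ≤ a* + b* / 2`. Hence, pointwise,
`(b* / 2) |uₜ| ≤ L² + (a* + b* / 2) |xₜ|` (`control_le`), so `E|xₜ| ≤ 4 L²` implies the claimed
bound on `E|uₜ|`.

Replacing `(a*, b*)` by `(aₜ, bₜ)` in the dynamics costs at most `(|xₜ| + |uₜ|) / L`, so
`|xₜ₊₁| ≤ L² + (|xₜ| + |uₜ|) / L + |wₜ|` (`next_position_le`). If `E|xₜ| ≤ 4 L²`, then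
`E|uₜ| ≤ L · L²` because the constant in the control bound is at most `L`, and therefore
`E|xₜ₊₁| ≤ L² + 4 L + L² + L² ≤ 4 L²`, using `L > 4`. Induction on `t` finishes the proof.
-/

open MeasureTheory

lemma control_le {A B a b x u e M : ℝ} (hA : 0 < A) (he : e ≤ B / 2)
    (h1 : |a - A| ≤ e) (h2 : |b - B| ≤ e) (h3 : |a * x + b * u| ≤ M) :
    B / 2 * |u| ≤ M + (A + B / 2) * |x| := by
  have ha : |a| ≤ A + B / 2 := by
    rw [abs_le] at h1 ⊢
    constructor <;> linarith
  have hb : B / 2 ≤ |b| := by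
    rw [abs_le] at h2
    exact le_trans (by linarith) (le_abs_self b)
  calc B / 2 * |u| ≤ |b| * |u| := by gcongr
    _ = |(a * x + b * u) - a * x| := by rw [← abs_mul]; congr 1; ring
    _ ≤ |a * x + b * u| + |a * x| := abs_sub _ _
    _ ≤ M + (A + B / 2) * |x| := by rw [abs_mul a x]; gcongr

lemma next_position_le {A B a b x u w e M : ℝ}
    (h1 : |a - A| ≤ e) (h2 : |b - B| ≤ e) (h3 : |a * x + b * u| ≤ M) :
    |A * x + B * u + w| ≤ M + e * |x| + e * |u| + |w| := by
  have e1 : |(a - A) * x| ≤ e * |x| := by rw [abs_mul]; gcongr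
  have e2 : |(b - B) * u| ≤ e * |u| := by rw [abs_mul]; gcongr
  have e3 := le_abs_self w
  have e4 := neg_abs_le w
  rw [abs_le] at *
  constructor <;> linarith [e1.1, e1.2, e2.1, e2.2, h3.1, h3.2]

/-- Expectation version of the bounded-trajectory lemma: if almost surely each control is
safe for dynamics within `1/log T` of the true dynamics `(a*, b*)`, the noise satisfies
`E[|w_t|] ≤ log² T`, the initial position is the deterministic `x₀` with
`|x₀| ≤ 4·log² T`, and the boundaries are bounded by `log² T`, then
`E[|x_t|] ≤ 4·log² T` and `E[|u_t|] ≤ (2·(1 + 4a* + 2b*)/b*)·log² T`. -/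
theorem bounded_positions_and_controls_expectation {Ω : Type*} [MeasurableSpace Ω]
    (μ : Measure Ω) [IsProbabilityMeasure μ] (T : ℕ) (hT : 2 ≤ T)
    (astar bstar DL DU : ℝ) (ha : 0 < astar) (hb : 0 < bstar) (hD : DL ≤ DU)
    (hDbound : max |DL| |DU| ≤ (Real.log T) ^ 2)
    (hlog1 : 4 < Real.log T) (hlog2 : 1 / Real.log T ≤ bstar / 2)
    (hlog3 : 2 * (1 + 4 * astar + 2 * bstar) / bstar ≤ Real.log T)
    (x₀ : ℝ) (hx₀ : |x₀| ≤ 4 * (Real.log T) ^ 2)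
    (x u w a b : ℕ → Ω → ℝ)
    (hxint : ∀ t ≤ T, Integrable (x t) μ)
    (huint : ∀ t < T, Integrable (u t) μ)
    (hwint : ∀ t < T, Integrable (w t) μ)
    (haint : ∀ t < T, Integrable (a t) μ)
    (hbint : ∀ t < T, Integrable (b t) μ)
    (hx0 : ∀ᵐ ω ∂μ, x 0 ω = x₀)
    (hdyn : ∀ t < T, ∀ᵐ ω ∂μ,
      |a t ω - astar| ≤ 1 / Real.log T ∧
      |b t ω - bstar| ≤ 1 / Real.log T ∧
      DL ≤ a t ω * x t ω + b t ω * u t ω ∧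
      a t ω * x t ω + b t ω * u t ω ≤ DU ∧
      x (t + 1) ω = astar * x t ω + bstar * u t ω + w t ω)
    (hw : ∀ t < T, ∫ ω, |w t ω| ∂μ ≤ (Real.log T) ^ 2) :
    (∀ t ≤ T, ∫ ω, |x t ω| ∂μ ≤ 4 * (Real.log T) ^ 2) ∧
      (∀ t < T, ∫ ω, |u t ω| ∂μ ≤
        (2 * (1 + 4 * astar + 2 * bstar) / bstar) * (Real.log T) ^ 2) := by
  set L := Real.log T with hL
  have hL0 : 0 < L := by linarith
  have safe : ∀ t < T, ∀ᵐ ω ∂μ, |a t ω * x t ω + b t ω * u t ω| ≤ L ^ 2 := by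
    intro t ht
    filter_upwards [hdyn t ht] with ω h
    have h1 := (max_le_iff.1 hDbound).1
    have h2 := (max_le_iff.1 hDbound).2
    rw [abs_le] at h1 h2 ⊢
    exact ⟨by linarith [h.2.2.1], by linarith [h.2.2.2.1]⟩
  have control : ∀ t < T, ∫ ω, |x t ω| ∂μ ≤ 4 * L ^ 2 →
      ∫ ω, |u t ω| ∂μ ≤ (2 * (1 + 4 * astar + 2 * bstar) / bstar) * L ^ 2 := by
    intro t ht hx
    have ix := (hxint t ht.le).abs
    have iu := (huint t ht).abs
    have key : ∫ ω, bstar / 2 * |u t ω| ∂μ ≤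
        ∫ ω, (L ^ 2 + (astar + bstar / 2) * |x t ω|) ∂μ := by
      apply integral_mono_ae (iu.const_mul _) ((integrable_const _).add (ix.const_mul _))
      filter_upwards [hdyn t ht, safe t ht] with ω h hs
      exact control_le ha hlog2 h.1 h.2.1 hs
    rw [integral_const_mul, integral_add (integrable_const _) (ix.const_mul _),
      integral_const_mul, integral_const, probReal_univ, one_smul] at key
    have hx' := mul_le_mul_of_nonneg_left hx (by positivity : 0 ≤ astar + bstar / 2)
    rw [div_mul_eq_mul_div, le_div_iff₀ hb]
    linarith
  have position : ∀ t ≤ T, ∫ ω, |x t ω| ∂μ ≤ 4 * L ^ 2 := by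
    intro t
    induction t with
    | zero =>
      intro _
      have h0 : ∫ ω, |x 0 ω| ∂μ = ∫ _, |x₀| ∂μ := by
        apply integral_congr_ae
        filter_upwards [hx0] with ω h
        rw [h]
      rw [h0, integral_const, probReal_univ, one_smul]
      exact hx₀
    | succ t ih =>
      intro ht
      have ht' : t < T := ht
      have hx := ih ht'.le
      have hu : ∫ ω, |u t ω| ∂μ ≤ L * L ^ 2 :=
        (control t ht' hx).trans (by gcongr)
      have ix := (hxint t ht'.le).abs
      have iu := (huint t ht').abs
      have iw := (hwint t ht').abs
      have i1 : Integrable (fun ω => L ^ 2 + 1 / L * |x t ω|) μ :=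
        (integrable_const _).add (ix.const_mul _)
      have i2 : Integrable (fun ω => L ^ 2 + 1 / L * |x t ω| + 1 / L * |u t ω|) μ :=
        i1.add (iu.const_mul _)
      have key : ∫ ω, |x (t + 1) ω| ∂μ ≤
          ∫ ω, (L ^ 2 + 1 / L * |x t ω| + 1 / L * |u t ω| + |w t ω|) ∂μ := by
        apply integral_mono_ae (hxint (t + 1) ht).abs (i2.add iw)
        filter_upwards [hdyn t ht', safe t ht'] with ω h hs
        rw [h.2.2.2.2]
        exact next_position_le h.1 h.2.1 hs
      rw [integral_add i2 iw, integral_add i1 (iu.const_mul _),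
        integral_add (integrable_const _) (ix.const_mul _), integral_const_mul,
        integral_const_mul, integral_const, probReal_univ, one_smul] at key
      have hx' : 1 / L * ∫ ω, |x t ω| ∂μ ≤ 4 * L := by
        calc 1 / L * ∫ ω, |x t ω| ∂μ ≤ 1 / L * (4 * L ^ 2) := by gcongr
          _ = 4 * L := by field_simp
      have hu' : 1 / L * ∫ ω, |u t ω| ∂μ ≤ L ^ 2 := by
        calc 1 / L * ∫ ω, |u t ω| ∂μ ≤ 1 / L * (L * L ^ 2) := by gcongr
          _ = L ^ 2 := by field_simp
      nlinarith [hw t ht']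
  exact ⟨position, fun t ht => control t ht (position t ht.le)⟩
end

section
/- Let a* > 0 and b* > 0 be real numbers. There exist constants γ₀ ∈ (0, b*/2] and C ≥ 1, depending only on a* and b*, such that the following holds. Let 0 ≤ γ ≤ γ₀, let D_L ≤ D_U be reals, let T ≥ 1, and let (x_t)_{t=0}^{T}, (u_t)_{t=0}^{T−1}, (w_t)_{t=0}^{T−1}, (a_t, b_t)_{t=0}^{T−1} be real sequences satisfying, for all t < T: |a_t − a*| ≤ γ, |b_t − b*| ≤ γ, D_L ≤ a_t·x_t + b_t·u_t ≤ D_U, and x_{t+1} = a*·x_t + b*·u_t + w_t. Then for all t ≤ T, |x_t| ≤ C·(|x₀| + max(|D_L|, |D_U|) + max_{i<t} |w_i|), and for all t < T, |u_t| ≤ C·(|x₀| + max(|D_L|, |D_U|) + max_{i<t} |w_i|), where the maximum over the empty set is taken to be 0. -/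
/-!
Write `d = a_t x_t + b_t u_t`, so that `|d| ≤ D := max |D_L| |D_U|`. Since `b_t ≥ b*/2`, solving for
the control gives `|u_t| ≤ (2/b*) (D + (a* + 1) |x_t|)` (`abs_control_le`). The true dynamics differ
from the estimated ones by `(a* - a_t) x_t + (b* - b_t) u_t`, of size at most `γ (|x_t| + |u_t|)`;
for `γ` small this is at most `|x_t| / 2 + D`, so `|x_{t+1}| ≤ |x_t| / 2 + 2 D + |w_t|`
(`abs_next_le`). This contraction keeps `|x_t|` below `4 (|x_0| + D + max_{i<t} |w_i|)`, and the
bound on `u_t` follows.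
-/

/-- `runningMaxAbs w t = max_{i < t} |w i|`, with the empty maximum equal to `0`. -/
def runningMaxAbs (w : ℕ → ℝ) : ℕ → ℝ
  | 0 => 0
  | t + 1 => max (runningMaxAbs w t) |w t|

lemma runningMaxAbs_nonneg (w : ℕ → ℝ) (t : ℕ) : 0 ≤ runningMaxAbs w t := by
  induction t with
  | zero => exact le_rfl
  | succ t ih => exact le_max_of_le_left ih

/-- A control that is safe for a nearby model is bounded linearly in the state. -/
lemma abs_control_le {A B γ D a b x u : ℝ} (hA : 0 < A) (hB : 0 < B) (hγB : γ ≤ B / 2)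
    (hγ1 : γ ≤ 1) (ha : |a - A| ≤ γ) (hb : |b - B| ≤ γ) (hd : |a * x + b * u| ≤ D) :
    |u| ≤ 2 / B * (D + (A + 1) * |x|) := by
  have hb' : B / 2 ≤ b := by linarith [(abs_le.mp hb).1]
  have ha' : |a| ≤ A + 1 := by
    rw [abs_le] at ha ⊢
    constructor <;> linarith [ha.1, ha.2]
  have hbu : |b * u| ≤ D + (A + 1) * |x| := by
    have h : b * u = (a * x + b * u) - a * x := by ring
    calc |b * u| ≤ |a * x + b * u| + |a * x| := by
          conv_lhs => rw [h]
          exact abs_sub _ _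
      _ ≤ D + (A + 1) * |x| := by
          rw [abs_mul a x]
          gcongr
  have hu : B / 2 * |u| ≤ D + (A + 1) * |x| := by
    refine le_trans ?_ hbu
    rw [abs_mul]
    gcongr
    exact hb'.trans (le_abs_self b)
  calc |u| = 2 / B * (B / 2 * |u|) := by field_simp
    _ ≤ _ := by gcongr

/-- One step of the true dynamics contracts the state by `1 / 2`, up to the boundary size and the
noise: the error in `a` contributes at most `|x| / 4`, the error in `b` at most `|x| / 4 + D`. -/
lemma abs_next_le {A B γ D a b x u w : ℝ} (hA : 0 < A) (hB : 0 < B) (hγ0 : 0 ≤ γ)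
    (hγB : γ ≤ B / 2) (hγ : γ ≤ 1 / 4) (hγAB : γ ≤ B / (8 * (A + 1)))
    (ha : |a - A| ≤ γ) (hb : |b - B| ≤ γ) (hd : |a * x + b * u| ≤ D) :
    |A * x + B * u + w| ≤ |x| / 2 + 2 * D + |w| := by
  have hu := abs_control_le hA hB hγB (by linarith) ha hb hd
  have hD : 0 ≤ D := (abs_nonneg _).trans hd
  have h1 : γ * (2 / B) ≤ 1 := by
    calc γ * (2 / B) ≤ B / 2 * (2 / B) := by gcongr
      _ = 1 := by field_simp
  have h2 : γ * (2 / B) * (A + 1) ≤ 1 / 4 := by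
    calc γ * (2 / B) * (A + 1) ≤ B / (8 * (A + 1)) * (2 / B) * (A + 1) := by gcongr
      _ = 1 / 4 := by field_simp; norm_num
  have hγu : γ * |u| ≤ D + |x| / 4 := by
    have h3 := mul_le_mul_of_nonneg_left hu hγ0
    have h4 := mul_le_mul_of_nonneg_right h1 hD
    have h5 := mul_le_mul_of_nonneg_right h2 (abs_nonneg x)
    linarith
  have hγx : γ * |x| ≤ |x| / 4 := by
    have := mul_le_mul_of_nonneg_right hγ (abs_nonneg x)
    linarith
  have hax : |(a - A) * x| ≤ γ * |x| := by rw [abs_mul]; gcongr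
  have hbu : |(b - B) * u| ≤ γ * |u| := by rw [abs_mul]; gcongr
  have hw := abs_le.mp (le_refl |w|)
  rw [abs_le] at hax hbu hd ⊢
  constructor <;> linarith [hax.1, hax.2, hbu.1, hbu.2, hd.1, hd.2, hw.1, hw.2]

/-- There exist constants `γ₀ ∈ (0, b*/2]` and `C ≥ 1`, depending only on `a*` and `b*`,
such that any trajectory whose controls are safe for dynamics within `γ ≤ γ₀` of `(a*, b*)`
satisfies `|x_t| ≤ C·(|x₀| + max(|D_L|, |D_U|) + max_{i<t} |w_i|)` for all `t ≤ T` and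
`|u_t| ≤ C·(|x₀| + max(|D_L|, |D_U|) + max_{i<t} |w_i|)` for all `t < T`. -/
theorem bounded_positions_and_controls_general (astar bstar : ℝ)
    (ha : 0 < astar) (hb : 0 < bstar) :
    ∃ γ₀ C : ℝ, 0 < γ₀ ∧ γ₀ ≤ bstar / 2 ∧ 1 ≤ C ∧
      ∀ (γ DL DU : ℝ) (T : ℕ) (x u w a b : ℕ → ℝ),
        0 ≤ γ → γ ≤ γ₀ → DL ≤ DU → 1 ≤ T →
        (∀ t < T,
          |a t - astar| ≤ γ ∧
          |b t - bstar| ≤ γ ∧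
          DL ≤ a t * x t + b t * u t ∧
          a t * x t + b t * u t ≤ DU ∧
          x (t + 1) = astar * x t + bstar * u t + w t) →
        (∀ t ≤ T, |x t| ≤ C * (|x 0| + max |DL| |DU| + runningMaxAbs w t)) ∧
          (∀ t < T, |u t| ≤ C * (|x 0| + max |DL| |DU| + runningMaxAbs w t)) := by
  have hA : 0 < astar + 1 := by linarith
  refine ⟨min (bstar / 2) (min (1 / 4) (bstar / (8 * (astar + 1)))),
    4 + 2 / bstar * (4 * astar + 5), by positivity, min_le_left _ _, ?_, ?_⟩
  · have : 0 ≤ 2 / bstar * (4 * astar + 5) := by positivity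
    linarith
  intro γ DL DU T x u w a b hγ0 hγ _ _ h
  obtain ⟨hγB, hγ'⟩ := le_min_iff.mp hγ
  obtain ⟨hγ4, hγAB⟩ := le_min_iff.mp hγ'
  have hd : ∀ t < T, |a t * x t + b t * u t| ≤ max |DL| |DU| := fun t ht =>
    abs_le_max_abs_abs (h t ht).2.2.1 (h t ht).2.2.2.1
  have hD : 0 ≤ max |DL| |DU| := le_max_of_le_left (abs_nonneg _)
  have hS : ∀ t, 0 ≤ |x 0| + max |DL| |DU| + runningMaxAbs w t := fun t =>
    add_nonneg (add_nonneg (abs_nonneg _) hD) (runningMaxAbs_nonneg w t)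
  have hx : ∀ t ≤ T, |x t| ≤ 4 * (|x 0| + max |DL| |DU| + runningMaxAbs w t) := by
    intro t
    induction t with
    | zero =>
      intro _
      linarith [abs_nonneg (x 0), runningMaxAbs_nonneg w 0]
    | succ t ih =>
      intro ht
      obtain ⟨hat, hbt, _, _, hstep⟩ := h t ht
      have hnext := abs_next_le (w := w t) ha hb hγ0 hγB hγ4 hγAB hat hbt (hd t ht)
      rw [← hstep] at hnext
      have hm1 : runningMaxAbs w t ≤ runningMaxAbs w (t + 1) := le_max_left _ _
      have hm2 : |w t| ≤ runningMaxAbs w (t + 1) := le_max_right _ _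
      linarith [ih (by omega), abs_nonneg (x 0), abs_nonneg (w t)]
  refine ⟨fun t ht => (hx t ht).trans ?_, fun t ht => ?_⟩
  · have : 0 ≤ 2 / bstar * (4 * astar + 5) := by positivity
    exact mul_le_mul_of_nonneg_right (by linarith) (hS t)
  · have hu := abs_control_le ha hb hγB (by linarith) (h t ht).1 (h t ht).2.1 (hd t ht)
    have hxt := hx t ht.le
    set S := |x 0| + max |DL| |DU| + runningMaxAbs w t with hSdef
    have hDS : max |DL| |DU| ≤ S := by
      linarith [abs_nonneg (x 0), runningMaxAbs_nonneg w t]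
    calc |u t| ≤ 2 / bstar * (max |DL| |DU| + (astar + 1) * |x t|) := hu
      _ ≤ 2 / bstar * (S + (astar + 1) * (4 * S)) := by gcongr
      _ = 2 / bstar * (4 * astar + 5) * S := by ring
      _ ≤ (4 + 2 / bstar * (4 * astar + 5)) * S :=
          mul_le_mul_of_nonneg_right (by linarith) (hS t)
end

section
/- Let (Ω, 𝓐, P) be a probability space with a filtration 𝓕₀ ⊆ 𝓕₁ ⊆ ⋯ ⊆ 𝓕_n ⊆ 𝓐, where n ≥ 1 is an integer, and let p ∈ (0, 1], c > 0, λ > 0. Let X₀, …, X_{n−1} be nonnegative random variables such that Xᵢ is 𝓕_{i+1}-measurable for each i < n. Let S be a random subset of {0, …, n−1} such that the event {i ∈ S} is 𝓕_{i+1}-measurable for each i < n, and for 0 ≤ i ≤ n set Sᵢ := S ∩ {0, …, i−1} (so the cardinality |Sᵢ| is 𝓕ᵢ-measurable). Let E* be an event with P(E*) > 0 such that for every i < n: (a) E[Xᵢ · 1_{E* ∩ {i ∈ S}} | 𝓕ᵢ] ≥ c·|Sᵢ|·P(E* ∩ {i ∈ S} | 𝓕ᵢ) almost surely; and (b) almost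 surely on E*, Xᵢ ≤ c·|Sᵢ|/(2p). Then, writing M := max(⌊p·|S| − λ·√|S|⌋, 1) (a random integer), one has P( Σ_{i<n} Xᵢ ≥ (c/4)·M·(M − 1) | E* ) ≥ 1 − n·exp(−λ²/2). -/
/-! Work under `Q = P(· | E*)`. Call `j ∈ S` *good* if `Xⱼ ≥ c|Sⱼ|/2`. Since `Xⱼ` has conditional
mean at least `c|Sⱼ|` and is at most `c|Sⱼ|/(2p)` on `E*`, a reverse Markov inequality shows that
`j ∈ S` is good with `Q`-conditional probability at least `p` given `j ∈ S` and the past; precisely,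
the increments `Dⱼ = 1_{j ∈ S}(p - 1_{j good})` satisfy `E_Q[w Dⱼ] ≤ 0` for every bounded
nonnegative `𝓕ⱼ`-measurable weight `w` (`integral_weight_incr_le`).

Hence `exp(t ∑ Dⱼ - t²|S|/2)` has `Q`-expectation at most `1` for every `t ≥ 0`
(`integral_expWeight_le`): by convexity of `exp` and `cosh t ≤ exp(t²/2)`, one step multiplies it by
at most `1 + a Dⱼ` with `a = sinh t · exp(-t²/2) ≥ 0` (`exp_step_le`). Markov's inequality with
`t = λ/√k` on each event `{|S| = k}`, `1 ≤ k ≤ n`, shows that except with `Q`-probability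
`n exp(-λ²/2)` the number `N` of good indices is at least `p|S| - λ√|S|`.

Finally, a good `j` preceded by `r` good indices contributes at least `cr/2`, so
`∑ Xᵢ ≥ (c/4) N (N - 1)` (`good_sum_le`). -/

open MeasureTheory ProbabilityTheory

/-- One-step estimate for the exponential weight; `e` is the value of the increment and is
bounded by `1` in absolute value. -/
lemma exp_step_le (t e : ℝ) (h1 : -1 ≤ e) (h2 : e ≤ 1) :
    Real.exp (t * e - t ^ 2 / 2) ≤ 1 + Real.sinh t * Real.exp (-(t ^ 2 / 2)) * e := by
  have hconv : Real.exp (t * e) ≤ Real.cosh t + Real.sinh t * e := by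
    -- `t * e` is the convex combination of `t` and `-t` with weights `(1 ± e) / 2`
    have := convexOn_exp.2 (Set.mem_univ t) (Set.mem_univ (-t))
      (show 0 ≤ (1 + e) / 2 by linarith) (show 0 ≤ (1 - e) / 2 by linarith) (by ring)
    simp only [smul_eq_mul] at this
    rw [show (1 + e) / 2 * t + (1 - e) / 2 * -t = t * e by ring] at this
    rw [Real.cosh_eq, Real.sinh_eq]
    linarith
  have hcosh := Real.cosh_le_exp_half_sq t
  have hpos := Real.exp_pos (-(t ^ 2 / 2))
  have hone : Real.exp (t ^ 2 / 2) * Real.exp (-(t ^ 2 / 2)) = 1 := by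
    rw [← Real.exp_add]; simp
  rw [sub_eq_add_neg, Real.exp_add]
  nlinarith [mul_le_mul_of_nonneg_right hconv hpos.le, mul_le_mul_of_nonneg_right hcosh hpos.le]

open Classical in
/-- `|Sᵢ| = |S ∩ {0, …, i-1}|`, written as a sum of indicators. -/
noncomputable def cnt {Ω : Type*} (S : Ω → Finset ℕ) (i : ℕ) (ω : Ω) : ℝ :=
  ∑ j ∈ Finset.range i, if j ∈ S ω then (1 : ℝ) else 0

open Classical in
/-- The number of good indices below `i`, those `j ∈ S` with `Xⱼ ≥ c|Sⱼ|/2`. -/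
noncomputable def goodCnt {Ω : Type*} (c : ℝ) (X : ℕ → Ω → ℝ) (S : Ω → Finset ℕ) (i : ℕ) (ω : Ω) :
    ℝ :=
  ∑ j ∈ Finset.range i, if j ∈ S ω ∧ c * cnt S j ω / 2 ≤ X j ω then (1 : ℝ) else 0

open Classical in
/-- The increment `Dᵢ = 1_{i ∈ S}(p - 1_{i good})`. -/
noncomputable def incr {Ω : Type*} (p c : ℝ) (X : ℕ → Ω → ℝ) (S : Ω → Finset ℕ) (i : ℕ) (ω : Ω) :
    ℝ :=
  if i ∈ S ω then p - (if c * cnt S i ω / 2 ≤ X i ω then 1 else 0) else 0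

/-- The exponential supermartingale `exp(t ∑_{j<i} Dⱼ - t²|Sᵢ|/2)`. -/
noncomputable def expWeight {Ω : Type*} (p c t : ℝ) (X : ℕ → Ω → ℝ) (S : Ω → Finset ℕ) (i : ℕ)
    (ω : Ω) : ℝ :=
  Real.exp (t * (p * cnt S i ω - goodCnt c X S i ω) - t ^ 2 / 2 * cnt S i ω)

/-! ### Pointwise estimates -/

section Pointwise

variable {Ω : Type*} {p c t : ℝ} {X : ℕ → Ω → ℝ} {S : Ω → Finset ℕ}

lemma cnt_eq_card (i : ℕ) (ω : Ω) : cnt S i ω = ((S ω ∩ Finset.range i).card : ℝ) := by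
  classical
  simp only [cnt, Finset.sum_boole]
  congr 2
  ext j
  simp [and_comm]

lemma cnt_nonneg (i : ℕ) (ω : Ω) : 0 ≤ cnt S i ω := by
  rw [cnt_eq_card]; positivity

lemma cnt_le (i : ℕ) (ω : Ω) : cnt S i ω ≤ i := by
  rw [cnt_eq_card]
  exact_mod_cast (Finset.card_le_card Finset.inter_subset_right).trans (Finset.card_range i).le

lemma goodCnt_nonneg (i : ℕ) (ω : Ω) : 0 ≤ goodCnt c X S i ω := by
  classical
  exact Finset.sum_nonneg fun j _ => by split_ifs <;> norm_num

lemma goodCnt_le_cnt (i : ℕ) (ω : Ω) : goodCnt c X S i ω ≤ cnt S i ω := by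
  classical
  refine Finset.sum_le_sum fun j _ => ?_
  by_cases h : j ∈ S ω <;> simp only [h, true_and, false_and, if_true, if_false, le_refl]
  split_ifs <;> norm_num

lemma abs_incr_le (hp0 : 0 < p) (hp1 : p ≤ 1) (i : ℕ) (ω : Ω) :
    -1 ≤ incr p c X S i ω ∧ incr p c X S i ω ≤ 1 := by
  unfold incr
  split_ifs <;> constructor <;> linarith

lemma expWeight_pos (i : ℕ) (ω : Ω) : 0 < expWeight p c t X S i ω := Real.exp_pos _

lemma expWeight_le (hp1 : p ≤ 1) (ht : 0 ≤ t) (i : ℕ) (ω : Ω) :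
    expWeight p c t X S i ω ≤ Real.exp (t * i) := by
  unfold expWeight
  refine Real.exp_le_exp.2 ?_
  have h1 := cnt_nonneg (S := S) i ω
  have h2 := cnt_le (S := S) i ω
  have h3 := goodCnt_nonneg (c := c) (X := X) (S := S) i ω
  have h4 : p * cnt S i ω - goodCnt c X S i ω ≤ i := by nlinarith
  have h5 := mul_le_mul_of_nonneg_left h4 ht
  have h6 : 0 ≤ t ^ 2 / 2 * cnt S i ω := by positivity
  linarith

lemma expWeight_succ_le (hp0 : 0 < p) (hp1 : p ≤ 1) (i : ℕ) (ω : Ω) :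
    expWeight p c t X S (i + 1) ω ≤ expWeight p c t X S i ω +
      Real.sinh t * Real.exp (-(t ^ 2 / 2)) * (expWeight p c t X S i ω * incr p c X S i ω) := by
  classical
  by_cases h : i ∈ S ω
  · have hs : expWeight p c t X S (i + 1) ω =
        expWeight p c t X S i ω * Real.exp (t * incr p c X S i ω - t ^ 2 / 2) := by
      unfold expWeight
      rw [← Real.exp_add]
      congr 1
      have h1 : cnt S (i + 1) ω = cnt S i ω + 1 := by
        simp only [cnt, Finset.sum_range_succ, if_pos h]
      have h2 : goodCnt c X S (i + 1) ω = goodCnt c X S i ω + (p - incr p c X S i ω) := by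
        by_cases hg : c * cnt S i ω / 2 ≤ X i ω
        · simp only [goodCnt, Finset.sum_range_succ, incr, if_pos h, if_pos hg,
            if_pos (And.intro h hg), sub_sub_cancel]
        · simp only [goodCnt, Finset.sum_range_succ, incr, if_pos h, if_neg hg,
            if_neg (fun h' : i ∈ S ω ∧ c * cnt S i ω / 2 ≤ X i ω => hg h'.2), sub_sub_cancel]
      rw [h1, h2]
      ring
    rw [hs]
    obtain ⟨h1, h2⟩ := abs_incr_le (c := c) (X := X) (S := S) hp0 hp1 i ω
    have := mul_le_mul_of_nonneg_left (exp_step_le t _ h1 h2)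
      (expWeight_pos (p := p) (c := c) (t := t) (X := X) (S := S) i ω).le
    linarith
  · have : expWeight p c t X S (i + 1) ω = expWeight p c t X S i ω := by
      have h1 : cnt S (i + 1) ω = cnt S i ω := by
        simp only [cnt, Finset.sum_range_succ, if_neg h, add_zero]
      have h2 : goodCnt c X S (i + 1) ω = goodCnt c X S i ω := by
        simp only [goodCnt, Finset.sum_range_succ,
          if_neg (fun h' : i ∈ S ω ∧ c * cnt S i ω / 2 ≤ X i ω => h h'.1), add_zero]
      rw [expWeight, expWeight, h1, h2]
    simp [this, incr, h]

/-- The reverse Markov inequality in pointwise form. The quotient by `|Sᵢ|` is `0` when `Sᵢ` is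
empty, in which case every `i ∈ S` is good and the left side is nonpositive. -/
lemma weight_mul_incr_le (hp0 : 0 < p) (hp1 : p ≤ 1) (hc : 0 < c) {i : ℕ} {ω : Ω} {w : ℝ}
    (hw : 0 ≤ w) (hi : i ∈ S ω) (hX0 : 0 ≤ X i ω) (hX : X i ω ≤ c * cnt S i ω / (2 * p)) :
    w * incr p c X S i ω ≤
      2 * p / c * (w / cnt S i ω * (c * cnt S i ω) - w / cnt S i ω * X i ω) := by
  rcases (cnt_nonneg (S := S) i ω).eq_or_lt with h0 | h0
  · have : incr p c X S i ω = p - 1 := by simp [incr, hi, ← h0, hX0]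
    rw [this, ← h0]
    simp only [div_zero, zero_mul, sub_zero, mul_zero]
    nlinarith
  · have key : cnt S i ω * incr p c X S i ω ≤ 2 * p / c * (c * cnt S i ω - X i ω) := by
      rw [le_div_iff₀ (by positivity)] at hX
      rw [div_mul_eq_mul_div, le_div_iff₀ hc]
      simp only [incr, hi, if_true]
      split_ifs with hg
      · nlinarith [mul_pos hc h0]
      · push Not at hg
        nlinarith
    have := mul_le_mul_of_nonneg_left key (div_nonneg hw h0.le)
    calc w * incr p c X S i ω = w / cnt S i ω * (cnt S i ω * incr p c X S i ω) := by
          field_simp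
      _ ≤ _ := this
      _ = _ := by ring

/-- A good index preceded by `r` good indices contributes at least `c r / 2`. -/
lemma good_sum_le (hc : 0 < c) (ω : Ω) (m : ℕ) (hX : ∀ i < m, 0 ≤ X i ω) :
    c / 4 * goodCnt c X S m ω * (goodCnt c X S m ω - 1) ≤ ∑ i ∈ Finset.range m, X i ω := by
  classical
  induction m with
  | zero => simp [goodCnt]
  | succ m ih =>
    have ih := ih fun i hi => hX i (by omega)
    have hm := hX m (by omega)
    rw [Finset.sum_range_succ]
    by_cases h : m ∈ S ω ∧ c * cnt S m ω / 2 ≤ X m ω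
    · have hs : goodCnt c X S (m + 1) ω = goodCnt c X S m ω + 1 := by
        simp only [goodCnt, Finset.sum_range_succ, if_pos h]
      rw [hs]
      have := mul_le_mul_of_nonneg_left (goodCnt_le_cnt (c := c) (X := X) (S := S) m ω) hc.le
      nlinarith [h.2]
    · have hs : goodCnt c X S (m + 1) ω = goodCnt c X S m ω := by
        simp only [goodCnt, Finset.sum_range_succ, if_neg h, add_zero]
      rw [hs]
      linarith

end Pointwise

/-! ### Adaptedness -/

section Measurability

variable {Ω : Type*} {n : ℕ} {𝓕 : ℕ → MeasurableSpace Ω} {p c t : ℝ} {X : ℕ → Ω → ℝ}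
  {S : Ω → Finset ℕ}

lemma measurable_cnt (hmono : Monotone 𝓕)
    (hSmeas : ∀ i < n, MeasurableSet[𝓕 (i + 1)] {ω | i ∈ S ω}) {i : ℕ} (hi : i ≤ n) :
    Measurable[𝓕 i] (cnt S i) := by
  classical
  unfold cnt
  refine Finset.measurable_fun_sum _ fun j hj => ?_
  have hj := Finset.mem_range.1 hj
  exact Measurable.ite (hmono hj _ (hSmeas j (by omega))) measurable_const measurable_const

lemma measurableSet_good (hmono : Monotone 𝓕)
    (hXmeas : ∀ i < n, Measurable[𝓕 (i + 1)] (X i))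
    (hSmeas : ∀ i < n, MeasurableSet[𝓕 (i + 1)] {ω | i ∈ S ω}) {i : ℕ} (hi : i < n) :
    MeasurableSet[𝓕 (i + 1)] {ω | c * cnt S i ω / 2 ≤ X i ω} := by
  have h := (measurable_cnt hmono hSmeas hi.le).mono (hmono (Nat.le_succ i)) le_rfl
  exact measurableSet_le ((h.const_mul c).div_const 2)
    (hXmeas i hi)

lemma measurable_goodCnt (hmono : Monotone 𝓕)
    (hXmeas : ∀ i < n, Measurable[𝓕 (i + 1)] (X i))
    (hSmeas : ∀ i < n, MeasurableSet[𝓕 (i + 1)] {ω | i ∈ S ω}) {i : ℕ} (hi : i ≤ n) :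
    Measurable[𝓕 i] (goodCnt c X S i) := by
  classical
  unfold goodCnt
  refine Finset.measurable_fun_sum _ fun j hj => ?_
  have hj := Finset.mem_range.1 hj
  have h1 := hmono hj _ (hSmeas j (by omega))
  have h2 := hmono hj _ (measurableSet_good (c := c) hmono hXmeas hSmeas (show j < n by omega))
  exact Measurable.ite (h1.inter h2) measurable_const measurable_const

lemma measurable_expWeight (hmono : Monotone 𝓕)
    (hXmeas : ∀ i < n, Measurable[𝓕 (i + 1)] (X i))
    (hSmeas : ∀ i < n, MeasurableSet[𝓕 (i + 1)] {ω | i ∈ S ω}) {i : ℕ} (hi : i ≤ n) :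
    Measurable[𝓕 i] (expWeight p c t X S i) := by
  have h1 := measurable_cnt hmono hSmeas hi
  have h2 := measurable_goodCnt (c := c) hmono hXmeas hSmeas hi
  exact Real.measurable_exp.comp ((((h1.const_mul p).sub h2).const_mul t).sub
    (h1.const_mul (t ^ 2 / 2)))

lemma measurable_incr (hmono : Monotone 𝓕)
    (hXmeas : ∀ i < n, Measurable[𝓕 (i + 1)] (X i))
    (hSmeas : ∀ i < n, MeasurableSet[𝓕 (i + 1)] {ω | i ∈ S ω}) {i : ℕ} (hi : i < n) :
    Measurable[𝓕 (i + 1)] (incr p c X S i) := by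
  classical
  have h1 := measurableSet_good (c := c) hmono hXmeas hSmeas hi
  exact Measurable.ite (hSmeas i hi)
    (measurable_const.sub (Measurable.ite h1 measurable_const measurable_const)) measurable_const

end Measurability

/-! ### The exponential supermartingale under conditioning on `E*` -/

/-- A conditional-expectation inequality `u E[f | m] ≤ E[g | m]` tested against a nonnegative
`m`-measurable weight `w`. -/
lemma integral_weighted_le_of_condExp {Ω : Type*} [m0 : MeasurableSpace Ω] (μ : Measure Ω)
    [IsProbabilityMeasure μ] {m : MeasurableSpace Ω} (hm : m ≤ m0) {w u f g : Ω → ℝ}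
    (hw : Measurable[m] w) (hu : Measurable[m] u) (hw0 : ∀ ω, 0 ≤ w ω)
    (hf : Integrable f μ) (hg : Integrable g μ)
    (hwg : Integrable (w * g) μ) (hwuf : Integrable ((w * u) * f) μ)
    (h : ∀ᵐ ω ∂μ, u ω * (μ[f | m]) ω ≤ (μ[g | m]) ω) :
    ∫ ω, ((w * u) * f) ω ∂μ ≤ ∫ ω, (w * g) ω ∂μ := by
  have e1 := condExp_mul_of_stronglyMeasurable_left (m := m) (μ := μ) (hw.mul hu).stronglyMeasurable
    hwuf hf
  have e2 := condExp_mul_of_stronglyMeasurable_left (m := m) (μ := μ) hw.stronglyMeasurable hwg hg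
  rw [← integral_condExp hm (f := (w * u) * f), ← integral_condExp hm (f := w * g)]
  refine integral_mono_ae integrable_condExp integrable_condExp ?_
  filter_upwards [e1, e2, h] with ω h1 h2 h3
  rw [h1, h2]
  simp only [Pi.mul_apply]
  rw [mul_assoc]
  exact mul_le_mul_of_nonneg_left h3 (hw0 ω)

/-- The increments have nonpositive mean on `E*` against every bounded nonnegative weight that is
measurable with respect to the past. -/
lemma integral_weight_incr_le {Ω : Type*} [m0 : MeasurableSpace Ω]
    (μ : Measure Ω) [IsProbabilityMeasure μ] (n : ℕ)
    (𝓕 : ℕ → MeasurableSpace Ω) (hmono : Monotone 𝓕) (hle : ∀ i, 𝓕 i ≤ m0)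
    (p c : ℝ) (hp0 : 0 < p) (hp1 : p ≤ 1) (hc : 0 < c)
    (X : ℕ → Ω → ℝ)
    (hXnonneg : ∀ i < n, ∀ ω, 0 ≤ X i ω)
    (hXmeas : ∀ i < n, Measurable[𝓕 (i + 1)] (X i))
    (S : Ω → Finset ℕ)
    (hSmeas : ∀ i < n, MeasurableSet[𝓕 (i + 1)] {ω | i ∈ S ω})
    (Estar : Set Ω) (hEstar : MeasurableSet Estar)
    (hcondLB : ∀ i < n, ∀ᵐ ω ∂μ,
      c * ((S ω ∩ Finset.range i).card : ℝ) *
          (μ[(Estar ∩ {ω' | i ∈ S ω'}).indicator (fun _ => (1 : ℝ)) | 𝓕 i]) ω ≤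
        (μ[(Estar ∩ {ω' | i ∈ S ω'}).indicator (X i) | 𝓕 i]) ω)
    (hbound : ∀ i < n, ∀ᵐ ω ∂μ, ω ∈ Estar →
      X i ω ≤ c * ((S ω ∩ Finset.range i).card : ℝ) / (2 * p)) {i : ℕ} (hi : i < n)
    {w : Ω → ℝ} (hw : Measurable[𝓕 i] w) (hw0 : ∀ ω, 0 ≤ w ω) {C : ℝ} (hwC : ∀ ω, w ω ≤ C) :
    ∫ ω in Estar, w ω * incr p c X S i ω ∂μ ≤ 0 := by
  classical
  set A : Set Ω := Estar ∩ {ω' | i ∈ S ω'} with hA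
  have hSi : MeasurableSet {ω | i ∈ S ω} := hle _ _ (hSmeas i hi)
  have hAm : MeasurableSet A := hEstar.inter hSi
  have hk : Measurable[𝓕 i] (cnt S i) := measurable_cnt hmono hSmeas hi.le
  have hk0 : Measurable (cnt S i) := hk.mono (hle i) le_rfl
  have hX0 : Measurable (X i) := (hXmeas i hi).mono (hle _) le_rfl
  have hwm : Measurable w := hw.mono (hle i) le_rfl
  have hq : Measurable[𝓕 i] (fun ω => w ω / cnt S i ω) := hw.div hk
  have hqm : Measurable (fun ω => w ω / cnt S i ω) := hwm.div hk0
  have hq0 : ∀ ω, 0 ≤ w ω / cnt S i ω := fun ω => div_nonneg (hw0 ω) (cnt_nonneg i ω)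
  -- `|Sᵢ|` is a natural number, so it is at least `1` unless it vanishes
  have hqC : ∀ ω, w ω / cnt S i ω ≤ C := by
    intro ω
    refine le_trans ?_ (hwC ω)
    rw [cnt_eq_card]
    rcases Nat.eq_zero_or_pos (S ω ∩ Finset.range i).card with h | h
    · simp [h, hw0]
    · exact div_le_self (hw0 ω) (by exact_mod_cast h)
  have hC0 : ∀ ω : Ω, 0 ≤ C := fun ω => (hw0 ω).trans (hwC ω)
  have hXb : ∀ᵐ ω ∂μ, ω ∈ Estar → X i ω ≤ c * cnt S i ω / (2 * p) := by
    simpa only [cnt_eq_card] using hbound i hi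
  have hg : Integrable (A.indicator (X i)) μ := by
    refine Integrable.of_bound (hX0.indicator hAm).aestronglyMeasurable (c * i / (2 * p)) ?_
    filter_upwards [hXb] with ω hω
    by_cases hωA : ω ∈ A
    · rw [Set.indicator_of_mem hωA, Real.norm_of_nonneg (hXnonneg i hi ω)]
      refine (hω hωA.1).trans ?_
      have := cnt_le (S := S) i ω
      gcongr
    · rw [Set.indicator_of_notMem hωA, norm_zero]
      positivity
  have hf : Integrable (A.indicator (fun _ => (1 : ℝ))) μ := (integrable_const 1).indicator hAm
  have hqb : ∀ᵐ ω ∂μ, ‖w ω / cnt S i ω‖ ≤ C := ae_of_all _ fun ω => by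
    rw [Real.norm_of_nonneg (hq0 ω)]; exact hqC ω
  have hwg : Integrable ((fun ω => w ω / cnt S i ω) * A.indicator (X i)) μ :=
    hg.bdd_mul hqm.aestronglyMeasurable hqb
  have hu : Measurable[𝓕 i] (fun ω => c * cnt S i ω) := hk.const_mul c
  have hwuf : Integrable (((fun ω => w ω / cnt S i ω) * (fun ω => c * cnt S i ω)) *
      A.indicator (fun _ => (1 : ℝ))) μ := by
    refine hf.bdd_mul (c := C * (c * i))
      (hqm.mul (hk0.const_mul c)).aestronglyMeasurable (ae_of_all _ fun ω => ?_)
    have h1 := cnt_nonneg (S := S) i ω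
    have h2 := cnt_le (S := S) i ω
    have h3 := hq0 ω
    have h4 := hC0 ω
    simp only [Pi.mul_apply]
    rw [Real.norm_of_nonneg (by positivity)]
    exact mul_le_mul (hqC ω) (by gcongr) (by positivity) h4
  have key := integral_weighted_le_of_condExp μ (hle i) hq hu hq0 hf hg hwg hwuf
    (by simpa only [cnt_eq_card] using hcondLB i hi)
  have hincr : Measurable (incr p c X S i) :=
    (measurable_incr hmono hXmeas hSmeas hi).mono (hle _) le_rfl
  have hinteg : Integrable (fun ω => w ω * incr p c X S i ω) μ := by
    refine Integrable.of_bound (hwm.mul hincr).aestronglyMeasurable C (ae_of_all _ fun ω => ?_)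
    rw [norm_mul, Real.norm_of_nonneg (hw0 ω)]
    calc w ω * ‖incr p c X S i ω‖ ≤ w ω * 1 := by
          refine mul_le_mul_of_nonneg_left ?_ (hw0 ω)
          exact abs_le.2 (abs_incr_le hp0 hp1 i ω)
      _ ≤ C := by rw [mul_one]; exact hwC ω
  rw [← integral_indicator hEstar]
  calc ∫ ω, Estar.indicator (fun ω => w ω * incr p c X S i ω) ω ∂μ
      ≤ ∫ ω, 2 * p / c * ((((fun ω => w ω / cnt S i ω) * (fun ω => c * cnt S i ω)) *
          A.indicator (fun _ => (1 : ℝ))) ω -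
          ((fun ω => w ω / cnt S i ω) * A.indicator (X i)) ω) ∂μ := by
        refine integral_mono_ae (hinteg.indicator hEstar) ((hwuf.sub hwg).const_mul _) ?_
        filter_upwards [hXb] with ω hω
        by_cases hE : ω ∈ Estar
        · rw [Set.indicator_of_mem hE]
          by_cases hS : i ∈ S ω
          · have hωA : ω ∈ A := ⟨hE, hS⟩
            simp only [Pi.mul_apply, Set.indicator_of_mem hωA, mul_one]
            exact weight_mul_incr_le hp0 hp1 hc (hw0 ω) hS (hXnonneg i hi ω) (hω hE)
          · have hωA : ω ∉ A := fun h => hS h.2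
            simp [Set.indicator_of_notMem hωA, incr, hS]
        · have hωA : ω ∉ A := fun h => hE h.1
          simp [Set.indicator_of_notMem hωA, Set.indicator_of_notMem hE]
    _ ≤ 0 := by
        rw [integral_const_mul, integral_sub hwuf hwg]
        exact mul_nonpos_of_nonneg_of_nonpos (by positivity) (by linarith)

lemma integrable_expWeight {Ω : Type*} [m0 : MeasurableSpace Ω] (Q : Measure Ω)
    [IsProbabilityMeasure Q] {p c t : ℝ} {X : ℕ → Ω → ℝ} {S : Ω → Finset ℕ} {i : ℕ}
    (hp1 : p ≤ 1) (ht : 0 ≤ t) (hm : Measurable (expWeight p c t X S i)) :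
    Integrable (expWeight p c t X S i) Q :=
  Integrable.of_bound hm.aestronglyMeasurable (Real.exp (t * i)) (ae_of_all _ fun ω => by
    rw [Real.norm_of_nonneg (expWeight_pos i ω).le]
    exact expWeight_le hp1 ht i ω)

/-- The exponential weights have mean at most `1` under `P(· | E*)`. -/
lemma integral_expWeight_le {Ω : Type*} [m0 : MeasurableSpace Ω]
    (μ : Measure Ω) [IsProbabilityMeasure μ] (n : ℕ)
    (𝓕 : ℕ → MeasurableSpace Ω) (hmono : Monotone 𝓕) (hle : ∀ i, 𝓕 i ≤ m0)
    (p c : ℝ) (hp0 : 0 < p) (hp1 : p ≤ 1) (hc : 0 < c)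
    (X : ℕ → Ω → ℝ)
    (hXnonneg : ∀ i < n, ∀ ω, 0 ≤ X i ω)
    (hXmeas : ∀ i < n, Measurable[𝓕 (i + 1)] (X i))
    (S : Ω → Finset ℕ)
    (hSmeas : ∀ i < n, MeasurableSet[𝓕 (i + 1)] {ω | i ∈ S ω})
    (Estar : Set Ω) (hEstar : MeasurableSet Estar) (hEpos : 0 < μ Estar)
    (hcondLB : ∀ i < n, ∀ᵐ ω ∂μ,
      c * ((S ω ∩ Finset.range i).card : ℝ) *
          (μ[(Estar ∩ {ω' | i ∈ S ω'}).indicator (fun _ => (1 : ℝ)) | 𝓕 i]) ω ≤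
        (μ[(Estar ∩ {ω' | i ∈ S ω'}).indicator (X i) | 𝓕 i]) ω)
    (hbound : ∀ i < n, ∀ᵐ ω ∂μ, ω ∈ Estar →
      X i ω ≤ c * ((S ω ∩ Finset.range i).card : ℝ) / (2 * p))
    {t : ℝ} (ht : 0 ≤ t) (i : ℕ) (hi : i ≤ n) :
    ∫ ω, expWeight p c t X S i ω ∂(μ[|Estar]) ≤ 1 := by
  have hQ : IsProbabilityMeasure (μ[|Estar]) := cond_isProbabilityMeasure hEpos.ne'
  induction i with
  | zero => simp [expWeight, cnt, goodCnt]
  | succ i ih =>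
    have hW : ∀ j ≤ n, Measurable (expWeight p c t X S j) := fun j hj =>
      (measurable_expWeight hmono hXmeas hSmeas hj).mono (hle _) le_rfl
    have hWi := integrable_expWeight (μ[|Estar]) hp1 ht (hW i (by omega))
    have hincr : Measurable (incr p c X S i) :=
      (measurable_incr hmono hXmeas hSmeas hi).mono (hle _) le_rfl
    have hWD : Integrable (fun ω => expWeight p c t X S i ω * incr p c X S i ω) (μ[|Estar]) :=
      hWi.mul_bdd hincr.aestronglyMeasurable (c := 1)
        (ae_of_all _ fun ω => abs_le.2 (abs_incr_le hp0 hp1 i ω))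
    have hneg : ∫ ω, expWeight p c t X S i ω * incr p c X S i ω ∂(μ[|Estar]) ≤ 0 := by
      have := integral_weight_incr_le μ n 𝓕 hmono hle p c hp0 hp1 hc X hXnonneg hXmeas S hSmeas
        Estar hEstar hcondLB hbound hi
        (measurable_expWeight (p := p) (c := c) (t := t) hmono hXmeas hSmeas (Nat.le_of_succ_le hi))
        (fun ω => (expWeight_pos i ω).le) (fun ω => expWeight_le hp1 ht i ω)
      rw [ProbabilityTheory.cond, integral_smul_measure]
      exact mul_nonpos_of_nonneg_of_nonpos ENNReal.toReal_nonneg this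
    calc ∫ ω, expWeight p c t X S (i + 1) ω ∂(μ[|Estar])
        ≤ ∫ ω, (expWeight p c t X S i ω + Real.sinh t * Real.exp (-(t ^ 2 / 2)) *
            (expWeight p c t X S i ω * incr p c X S i ω)) ∂(μ[|Estar]) :=
          integral_mono (integrable_expWeight _ hp1 ht (hW _ hi)) (hWi.add (hWD.const_mul _))
            fun ω => expWeight_succ_le hp0 hp1 i ω
      _ ≤ 1 := by
          rw [integral_add hWi (hWD.const_mul _), integral_const_mul]
          have h1 := ih (by omega)
          have h2 : 0 ≤ Real.sinh t * Real.exp (-(t ^ 2 / 2)) :=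
            mul_nonneg (Real.sinh_nonneg_iff.2 ht) (Real.exp_pos _).le
          nlinarith

/-! ### The lower bound for the sum -/

/-- Anti-concentration for a sum of adapted nonnegative random variables: under the
conditional-mean lower bound (a) and the boundedness condition (b) on the event `E*`,
with `M := max(⌊p·|S| − λ·√|S|⌋, 1)`, we have
`P(Σ_{i<n} Xᵢ ≥ (c/4)·M·(M−1) | E*) ≥ 1 − n·exp(−λ²/2)`. -/
theorem sum_of_dependent_random_lower_bound {Ω : Type*} [m0 : MeasurableSpace Ω]
    (μ : Measure Ω) [IsProbabilityMeasure μ] (n : ℕ) (hn : 1 ≤ n)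
    (𝓕 : ℕ → MeasurableSpace Ω) (hmono : Monotone 𝓕) (hle : ∀ i, 𝓕 i ≤ m0)
    (p c lam : ℝ) (hp0 : 0 < p) (hp1 : p ≤ 1) (hc : 0 < c) (hlam : 0 < lam)
    (X : ℕ → Ω → ℝ)
    (hXnonneg : ∀ i < n, ∀ ω, 0 ≤ X i ω)
    (hXmeas : ∀ i < n, Measurable[𝓕 (i + 1)] (X i))
    (S : Ω → Finset ℕ) (hSsub : ∀ ω, S ω ⊆ Finset.range n)
    (hSmeas : ∀ i < n, MeasurableSet[𝓕 (i + 1)] {ω | i ∈ S ω})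
    (Estar : Set Ω) (hEstar : MeasurableSet Estar) (hEpos : 0 < μ Estar)
    (hcondLB : ∀ i < n, ∀ᵐ ω ∂μ,
      c * ((S ω ∩ Finset.range i).card : ℝ) *
          (μ[(Estar ∩ {ω' | i ∈ S ω'}).indicator (fun _ => (1 : ℝ)) | 𝓕 i]) ω ≤
        (μ[(Estar ∩ {ω' | i ∈ S ω'}).indicator (X i) | 𝓕 i]) ω)
    (hbound : ∀ i < n, ∀ᵐ ω ∂μ, ω ∈ Estar →
      X i ω ≤ c * ((S ω ∩ Finset.range i).card : ℝ) / (2 * p)) :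
    1 - n * Real.exp (-(lam ^ 2) / 2) ≤
      (μ[|Estar] {ω |
        (c / 4) *
            ((max ⌊p * ((S ω).card : ℝ) - lam * Real.sqrt ((S ω).card : ℝ)⌋ 1 : ℤ) : ℝ) *
            (((max ⌊p * ((S ω).card : ℝ) - lam * Real.sqrt ((S ω).card : ℝ)⌋ 1 : ℤ) : ℝ) - 1) ≤
          ∑ i ∈ Finset.range n, X i ω}).toReal := by
  classical
  have hQ : IsProbabilityMeasure (μ[|Estar]) := cond_isProbabilityMeasure hEpos.ne'
  set Q := μ[|Estar] with hQdef
  have hcard : ∀ ω, ((S ω).card : ℝ) = cnt S n ω := fun ω => by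
    rw [cnt_eq_card, Finset.inter_eq_left.2 (hSsub ω)]
  -- too few good indices while `|S| = k`
  let B : ℕ → Set Ω := fun k =>
    {ω | cnt S n ω = k ∧ lam * √(k : ℝ) < p * cnt S n ω - goodCnt c X S n ω}
  have hB : ∀ k ∈ Finset.Icc 1 n, Q.real (B k) ≤ Real.exp (-(lam ^ 2) / 2) := by
    intro k hk
    have hk1 : (1 : ℝ) ≤ k := by exact_mod_cast (Finset.mem_Icc.1 hk).1
    have hsq : 0 < √(k : ℝ) := Real.sqrt_pos.2 (by linarith)
    have hsq2 : √(k : ℝ) ^ 2 = k := Real.sq_sqrt (by linarith)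
    have ht : 0 ≤ lam / √(k : ℝ) := by positivity
    have hWm : Measurable (expWeight p c (lam / √(k : ℝ)) X S n) :=
      (measurable_expWeight hmono hXmeas hSmeas le_rfl).mono (hle _) le_rfl
    have hmk := mul_meas_ge_le_integral_of_nonneg (μ := Q)
      (ae_of_all _ fun ω => (expWeight_pos (p := p) (c := c) (t := lam / √(k : ℝ)) (X := X)
        (S := S) n ω).le) (integrable_expWeight Q hp1 ht hWm) (Real.exp (lam ^ 2 / 2))
    have hinteg := integral_expWeight_le μ n 𝓕 hmono hle p c hp0 hp1 hc X hXnonneg hXmeas S hSmeas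
        Estar hEstar hEpos hcondLB hbound ht n le_rfl
    have hsub : B k ⊆ {ω | Real.exp (lam ^ 2 / 2) ≤ expWeight p c (lam / √(k : ℝ)) X S n ω} := by
      rintro ω ⟨h1, h2⟩
      refine Real.exp_le_exp.2 ?_
      have h3 := mul_le_mul_of_nonneg_left h2.le ht
      have h4 : lam / √(k : ℝ) * (lam * √(k : ℝ)) = lam ^ 2 := by field_simp
      have h5 : (lam / √(k : ℝ)) ^ 2 / 2 * cnt S n ω = lam ^ 2 / 2 := by
        rw [h1, div_pow, hsq2]; field_simp
      rw [h5]
      linarith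
    have hmeas := measureReal_mono (μ := Q) hsub
    have hexp : Real.exp (lam ^ 2 / 2) * Real.exp (-(lam ^ 2) / 2) = 1 := by
      rw [← Real.exp_add, neg_div]; simp
    have hpos := Real.exp_pos (lam ^ 2 / 2)
    have hle1 : Real.exp (lam ^ 2 / 2) * Q.real (B k) ≤ 1 :=
      ((mul_le_mul_of_nonneg_left hmeas hpos.le).trans hmk).trans hinteg
    refine le_of_mul_le_mul_left ?_ hpos
    rw [hexp]
    exact hle1
  have hunion : Q.real (⋃ k ∈ Finset.Icc 1 n, B k) ≤ n * Real.exp (-(lam ^ 2) / 2) := by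
    refine (measureReal_biUnion_finset_le _ _).trans ((Finset.sum_le_sum hB).trans ?_)
    simp
  set G : Set Ω := {ω |
        (c / 4) *
            ((max ⌊p * ((S ω).card : ℝ) - lam * Real.sqrt ((S ω).card : ℝ)⌋ 1 : ℤ) : ℝ) *
            (((max ⌊p * ((S ω).card : ℝ) - lam * Real.sqrt ((S ω).card : ℝ)⌋ 1 : ℤ) : ℝ) - 1) ≤
          ∑ i ∈ Finset.range n, X i ω} with hG
  have hcover : Set.univ ⊆ G ∪ ⋃ k ∈ Finset.Icc 1 n, B k := by
    intro ω _
    by_cases hbad : ω ∈ ⋃ k ∈ Finset.Icc 1 n, B k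
    · exact Or.inr hbad
    refine Or.inl ?_
    have hgood := good_sum_le (S := S) hc ω n fun i hi => hXnonneg i hi ω
    have hsum : 0 ≤ ∑ i ∈ Finset.range n, X i ω :=
      Finset.sum_nonneg fun i hi => hXnonneg i (Finset.mem_range.1 hi) ω
    rw [hG, Set.mem_ofPred_eq]
    rcases le_total ⌊p * ((S ω).card : ℝ) - lam * √((S ω).card : ℝ)⌋ 1 with hM | hM
    · rw [max_eq_right hM]; simpa using hsum
    rw [max_eq_left hM]
    set M := ⌊p * ((S ω).card : ℝ) - lam * √((S ω).card : ℝ)⌋ with hMdef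
    have hfl : (M : ℝ) ≤ p * ((S ω).card : ℝ) - lam * √((S ω).card : ℝ) := Int.floor_le _
    have hM1 : (1 : ℝ) ≤ M := by exact_mod_cast hM
    have hSpos : 1 ≤ (S ω).card := by
      rcases Nat.eq_zero_or_pos (S ω).card with h | h
      · rw [h] at hfl; simp at hfl; linarith
      · exact h
    have hSn : (S ω).card ≤ n := (Finset.card_le_card (hSsub ω)).trans (Finset.card_range n).le
    have hnot : ω ∉ B (S ω).card := fun h =>
      hbad (Set.mem_biUnion (Finset.mem_Icc.2 ⟨hSpos, hSn⟩) h)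
    have hN : p * cnt S n ω - goodCnt c X S n ω ≤ lam * √((S ω).card : ℝ) := by
      by_contra! h
      exact hnot ⟨(hcard ω).symm, h⟩
    rw [← hcard] at hN
    have hMN : (M : ℝ) ≤ goodCnt c X S n ω := by linarith
    refine le_trans ?_ hgood
    rw [mul_assoc, mul_assoc]
    refine mul_le_mul_of_nonneg_left ?_ (by positivity)
    nlinarith
  have h1 : (1 : ℝ) ≤ Q.real G + Q.real (⋃ k ∈ Finset.Icc 1 n, B k) := by
    rw [← probReal_univ (μ := Q)]
    exact (measureReal_mono hcover).trans (measureReal_union_le _ _)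
  change _ ≤ Q.real G
  linarith
end

section
/- Let (Ω, 𝓐, Q) be a probability space with a filtration 𝓕₀ ⊆ 𝓕₁ ⊆ ⋯ ⊆ 𝓕_n ⊆ 𝓐, where n ≥ 1 is an integer, and let p ∈ (0, 1] and λ > 0. Let A₀, …, A_{n−1} be {0, 1}-valued random variables such that Aᵢ is 𝓕_{i+1}-measurable and Q(Aᵢ = 1 | 𝓕ᵢ) ≥ p almost surely for each i < n. Then Q( for all m ∈ {1, …, n}: Σ_{i<m} Aᵢ ≥ p·m − λ·√m ) ≥ 1 − n·exp(−λ²/2). -/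
/-!
Write `S_m = Σ_{i<m} (p - A_i)`. As `A_m` is `{0,1}`-valued, `exp (t (p - A_m))` is an affine
function of `A_m`, decreasing for `t ≥ 0`; so conditioning on `𝓕 m` and using
`Q(A_m = 1 | 𝓕 m) ≥ p` multiplies the exponential moment of `S_m` by at most
`(1 - p) exp (t p) + p exp (t (p - 1))`, the moment generating function of a centred Bernoulli
variable, which is at most `exp (t ^ 2 / 2)`. Hence `E exp (t S_m) ≤ exp (m t ^ 2 / 2)`
(`exp_moment_le`). The Chernoff bound with `t = λ / √m` gives `Q(S_m ≥ λ √m) ≤ exp (-λ ^ 2 / 2)`,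
and a union bound over `m` finishes the proof.

The exponential moments are estimated directly, rather than through Mathlib's conditionally
sub-Gaussian variables, because the latter require a standard Borel space.
-/

open MeasureTheory

/-- The bound `E exp (t (p - B)) ≤ exp (t ^ 2 / 2)` for a Bernoulli variable `B` of mean `p`. -/
lemma bernoulli_mgf_le (p t : ℝ) (hp0 : 0 ≤ p) (hp1 : p ≤ 1) :
    Real.exp (t * p) - (Real.exp (t * p) - Real.exp (t * (p - 1))) * p ≤ Real.exp (t ^ 2 / 2) := by
  -- By convexity `exp (t y)` lies below its chord over `[-1, 1]`, namely `cosh t + y sinh t`.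
  have chord : ∀ y : ℝ, -1 ≤ y → y ≤ 1 →
      Real.exp (t * y) ≤ (1 + y) / 2 * Real.exp t + (1 - y) / 2 * Real.exp (-t) := by
    intro y h1 h2
    have h := convexOn_exp.2 (Set.mem_univ t) (Set.mem_univ (-t))
      (show 0 ≤ (1 + y) / 2 by linarith) (show 0 ≤ (1 - y) / 2 by linarith) (by ring)
    simp only [smul_eq_mul] at h
    have he : t * y = (1 + y) / 2 * t + (1 - y) / 2 * -t := by ring
    rwa [he]
  have h1 := mul_le_mul_of_nonneg_left (chord p (by linarith) hp1) (sub_nonneg.2 hp1)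
  have h2 := mul_le_mul_of_nonneg_left (chord (p - 1) (by linarith) (by linarith)) hp0
  have h3 := Real.cosh_le_exp_half_sq t
  rw [Real.cosh_eq] at h3
  linarith

section

variable {Ω : Type*} [m0 : MeasurableSpace Ω] (Q : Measure Ω) [IsProbabilityMeasure Q] (n : ℕ)
    (𝓕 : ℕ → MeasurableSpace Ω) (hmono : Monotone 𝓕) (hle : ∀ i, 𝓕 i ≤ m0)
    (p : ℝ) (hp0 : 0 < p) (hp1 : p ≤ 1)
    (A : ℕ → Ω → ℝ)
    (hval : ∀ i < n, ∀ ω, A i ω = 0 ∨ A i ω = 1)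
    (hmeas : ∀ i < n, Measurable[𝓕 (i + 1)] (A i))
    (hcond : ∀ i < n, ∀ᵐ ω ∂Q,
      p ≤ (Q[({ω' | A i ω' = 1}).indicator (fun _ => (1 : ℝ)) | 𝓕 i]) ω)

omit m0 in
include hmono hmeas in
lemma measurable_partial_sum (m : ℕ) (hm : m ≤ n) :
    Measurable[𝓕 m] (fun ω => ∑ i ∈ Finset.range m, (p - A i ω)) := by
  refine Finset.measurable_fun_sum _ fun i hi => ?_
  have hi : i < m := Finset.mem_range.1 hi
  exact measurable_const.sub ((hmeas i (by omega)).mono (hmono (by omega)) le_rfl)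

omit m0 in
include hval hp0 hp1 in
lemma abs_partial_sum_le (m : ℕ) (hm : m ≤ n) (ω : Ω) :
    |∑ i ∈ Finset.range m, (p - A i ω)| ≤ m := by
  refine (Finset.abs_sum_le_sum_abs _ _).trans ?_
  refine (Finset.sum_le_card_nsmul _ _ 1 fun i hi => ?_).trans (by simp)
  have hi : i < m := Finset.mem_range.1 hi
  rcases hval i (by omega) ω with h | h <;> rw [h, abs_le] <;> constructor <;> linarith

include hmono hle hval hmeas hp0 hp1 in
lemma integrable_exp_partial_sum (t : ℝ) (m : ℕ) (hm : m ≤ n) :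
    Integrable (fun ω => Real.exp (t * ∑ i ∈ Finset.range m, (p - A i ω))) Q := by
  refine Integrable.of_bound (C := Real.exp (|t| * m)) ?_ (ae_of_all _ fun ω => ?_)
  · have := (measurable_partial_sum n 𝓕 hmono p A hmeas m hm).mono (hle m) le_rfl
    exact (Real.measurable_exp.comp (this.const_mul t)).aestronglyMeasurable
  · rw [Real.norm_eq_abs, Real.abs_exp, Real.exp_le_exp]
    refine (le_abs_self _).trans ?_
    rw [abs_mul]
    exact mul_le_mul_of_nonneg_left (abs_partial_sum_le n p hp0 hp1 A hval m hm ω) (abs_nonneg t)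

include hmono hle hval hmeas hcond hp0 hp1 in
lemma exp_moment_le (t : ℝ) (ht : 0 ≤ t) (m : ℕ) (hm : m ≤ n) :
    ∫ ω, Real.exp (t * ∑ i ∈ Finset.range m, (p - A i ω)) ∂Q ≤ Real.exp (m * (t ^ 2 / 2)) := by
  induction m with
  | zero => simp
  | succ m ih =>
    have hmn : m < n := hm
    have ih := ih hmn.le
    set f : Ω → ℝ := fun ω => Real.exp (t * ∑ i ∈ Finset.range m, (p - A i ω)) with hf
    have hAind : ({ω' | A m ω' = 1}).indicator (fun _ => (1 : ℝ)) = A m := by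
      funext ω
      rcases hval m hmn ω with h | h <;> simp [Set.indicator, h]
    have hc := hcond m hmn
    rw [hAind] at hc
    have hfm : StronglyMeasurable[𝓕 m] f := by
      have := measurable_partial_sum n 𝓕 hmono p A hmeas m hmn.le
      exact (Real.measurable_exp.comp (this.const_mul t)).stronglyMeasurable
    have hfi : Integrable f Q :=
      integrable_exp_partial_sum Q n 𝓕 hmono hle p hp0 hp1 A hval hmeas t m hmn.le
    have hAm : AEStronglyMeasurable (A m) Q :=
      ((hmeas m hmn).mono (hle (m + 1)) le_rfl).aestronglyMeasurable
    have hAb : ∀ᵐ ω ∂Q, ‖A m ω‖ ≤ 1 := ae_of_all _ fun ω => by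
      rcases hval m hmn ω with h | h <;> simp [h]
    have hAi : Integrable (A m) Q := Integrable.of_bound hAm 1 hAb
    have hfA : Integrable (f * A m) Q := hfi.mul_bdd hAm hAb
    have key : p * ∫ ω, f ω ∂Q ≤ ∫ ω, (f * A m) ω ∂Q := by
      have hce := condExp_mul_of_stronglyMeasurable_left hfm hfA hAi
      rw [← integral_condExp (hle m) (f := f * A m), ← integral_const_mul]
      refine integral_mono_ae (hfi.const_mul p) integrable_condExp ?_
      filter_upwards [hce, hc] with ω h1 h2
      rw [h1, Pi.mul_apply, mul_comm]
      exact mul_le_mul_of_nonneg_left h2 (Real.exp_pos _).le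
    -- `exp (t (p - A))` is affine in `A` because `A` takes only the values `0` and `1`.
    have hstep : ∀ ω, Real.exp (t * ∑ i ∈ Finset.range (m + 1), (p - A i ω)) =
        Real.exp (t * p) * f ω
          - (Real.exp (t * p) - Real.exp (t * (p - 1))) * (f * A m) ω := by
      intro ω
      rw [Finset.sum_range_succ, mul_add, Real.exp_add, Pi.mul_apply]
      rcases hval m hmn ω with h | h <;> simp only [h, hf, sub_zero] <;> ring
    simp_rw [hstep]
    rw [integral_sub (hfi.const_mul _) (hfA.const_mul _), integral_const_mul, integral_const_mul]
    have hd : 0 ≤ Real.exp (t * p) - Real.exp (t * (p - 1)) := by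
      rw [sub_nonneg, Real.exp_le_exp]
      nlinarith
    have hk := mul_le_mul_of_nonneg_left key hd
    have hb := mul_le_mul_of_nonneg_right (bernoulli_mgf_le p t hp0.le hp1)
      (integral_nonneg fun ω => (Real.exp_pos _).le : 0 ≤ ∫ ω, f ω ∂Q)
    have hi := mul_le_mul_of_nonneg_left ih (Real.exp_pos (t ^ 2 / 2)).le
    rw [← Real.exp_add] at hi
    have he : ((m + 1 : ℕ) : ℝ) * (t ^ 2 / 2) = t ^ 2 / 2 + m * (t ^ 2 / 2) := by
      push_cast
      ring
    rw [he]
    linarith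

include hmono hle hval hmeas hcond hp0 hp1 in
/-- The one-time Azuma–Hoeffding tail bound. -/
lemma tail_le (lam : ℝ) (hlam : 0 < lam) (m : ℕ) (hm1 : 1 ≤ m) (hm : m ≤ n) :
    Q.real {ω | lam * Real.sqrt m ≤ ∑ i ∈ Finset.range m, (p - A i ω)} ≤
      Real.exp (-(lam ^ 2) / 2) := by
  have hm0 : (0 : ℝ) < m := by exact_mod_cast hm1
  have hs : 0 < Real.sqrt m := Real.sqrt_pos.2 hm0
  have hsq : Real.sqrt m ^ 2 = m := Real.sq_sqrt hm0.le
  -- `t = lam / √m` minimises the Chernoff exponent `m t ^ 2 / 2 - t lam √m`.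
  have ht : 0 ≤ lam / Real.sqrt m := (div_pos hlam hs).le
  refine (ProbabilityTheory.measure_ge_le_exp_mul_mgf _ ht
    (integrable_exp_partial_sum Q n 𝓕 hmono hle p hp0 hp1 A hval hmeas _ m hm)).trans ?_
  refine (mul_le_mul_of_nonneg_left
    (exp_moment_le Q n 𝓕 hmono hle p hp0 hp1 A hval hmeas hcond _ ht m hm)
    (Real.exp_pos _).le).trans ?_
  rw [← Real.exp_add, Real.exp_le_exp]
  apply le_of_eq
  field_simp
  rw [hsq]
  ring

end

/-- Uniform-in-`m` lower-deviation bound (Azuma–Hoeffding plus union bound) for adapted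
`{0,1}`-valued random variables with conditional success probability at least `p`:
`Q(∀ m ∈ {1, …, n}, Σ_{i<m} Aᵢ ≥ p·m − λ·√m) ≥ 1 − n·exp(−λ²/2)`. -/
theorem bernoulli_uniform_lower_deviation {Ω : Type*} [m0 : MeasurableSpace Ω]
    (Q : Measure Ω) [IsProbabilityMeasure Q] (n : ℕ) (hn : 1 ≤ n)
    (𝓕 : ℕ → MeasurableSpace Ω) (hmono : Monotone 𝓕) (hle : ∀ i, 𝓕 i ≤ m0)
    (p lam : ℝ) (hp0 : 0 < p) (hp1 : p ≤ 1) (hlam : 0 < lam)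
    (A : ℕ → Ω → ℝ)
    (hval : ∀ i < n, ∀ ω, A i ω = 0 ∨ A i ω = 1)
    (hmeas : ∀ i < n, Measurable[𝓕 (i + 1)] (A i))
    (hcond : ∀ i < n, ∀ᵐ ω ∂Q,
      p ≤ (Q[({ω' | A i ω' = 1}).indicator (fun _ => (1 : ℝ)) | 𝓕 i]) ω) :
    1 - n * Real.exp (-(lam ^ 2) / 2) ≤
      (Q {ω | ∀ m : ℕ, 1 ≤ m → m ≤ n →
        p * m - lam * Real.sqrt m ≤ ∑ i ∈ Finset.range m, A i ω}).toReal := by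
  set G := {ω | ∀ m : ℕ, 1 ≤ m → m ≤ n →
        p * m - lam * Real.sqrt m ≤ ∑ i ∈ Finset.range m, A i ω} with hG
  change _ ≤ Q.real G
  have hcover : (Set.univ : Set Ω) ⊆ G ∪ ⋃ m ∈ Finset.Icc 1 n,
      {ω | lam * Real.sqrt m ≤ ∑ i ∈ Finset.range m, (p - A i ω)} := by
    intro ω _
    by_cases h : ω ∈ G
    · exact Or.inl h
    · right
      simp only [hG, Set.mem_ofPred_eq, not_forall, not_le] at h
      obtain ⟨m, h1, h2, h3⟩ := h
      simp only [Set.mem_iUnion]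
      refine ⟨m, Finset.mem_Icc.2 ⟨h1, h2⟩, ?_⟩
      simp only [Set.mem_ofPred_eq, Finset.sum_sub_distrib, Finset.sum_const, Finset.card_range,
        nsmul_eq_mul]
      linarith
  have h1 : Q.real Set.univ ≤ _ := measureReal_mono hcover
  have h2 := h1.trans (measureReal_union_le _ _)
  have h3 := measureReal_biUnion_finset_le (μ := Q) (Finset.Icc 1 n)
    (fun m : ℕ => {ω | lam * Real.sqrt m ≤ ∑ i ∈ Finset.range m, (p - A i ω)})
  have h4 := Finset.sum_le_card_nsmul (Finset.Icc 1 n)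
    (fun m : ℕ => Q.real {ω | lam * Real.sqrt m ≤ ∑ i ∈ Finset.range m, (p - A i ω)})
    (Real.exp (-(lam ^ 2) / 2)) (fun m hm => by
      obtain ⟨ha, hb⟩ := Finset.mem_Icc.1 hm
      exact tail_le Q n 𝓕 hmono hle p hp0 hp1 A hval hmeas hcond lam hlam m ha hb)
  simp only [Nat.card_Icc, Nat.add_sub_cancel, nsmul_eq_mul] at h4
  rw [probReal_univ] at h2
  linarith
end
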